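/- Let Â = A + εB be an n×n dual matrix and let X be the Moore–Penrose inverse of A. Then Â has a dual core generalized inverse if and only if there exists a real n×n matrix G that is a group inverse of A (so A has index one) and (Iₙ − AX)·B·(Iₙ − A·G) = 0. -/

import Mathlib

open Matrix

/-- The dual matrix `A + εB`, viewed as a matrix over the dual numbers `ℝ[ε]`. -/
def dm {n : ℕ} (A B : Matrix (Fin n) (Fin n) ℝ) :
    Matrix (Fin n) (Fin n) (DualNumber ℝ) :=
  fun i j => TrivSqZeroExt.inl (A i j) + TrivSqZeroExt.inr (B i j)

/-- A dual matrix has dual index one iff its column space equals that of its square,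
equivalently (as shown in the paper) there is a dual matrix `X` with `M² * X = M`. -/
def DualIndexOne {n : ℕ} (M : Matrix (Fin n) (Fin n) (DualNumber ℝ)) : Prop :=
  ∃ X : Matrix (Fin n) (Fin n) (DualNumber ℝ), M * M * X = M

/-- `G` is a group inverse of the real matrix `A`. -/
def IsGroupInv {n : ℕ} (A G : Matrix (Fin n) (Fin n) ℝ) : Prop :=
  A * G * A = A ∧ G * A * G = G ∧ A * G = G * A

/-- `X` is the Moore–Penrose inverse of the real matrix `A`. -/
def IsMoorePenrose {n : ℕ} (A X : Matrix (Fin n) (Fin n) ℝ) : Prop :=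
  A * X * A = A ∧ X * A * X = X ∧ (A * X)ᵀ = A * X ∧ (X * A)ᵀ = X * A

/-- `C` is a core inverse of the real matrix `A`. -/
def IsCoreInv {n : ℕ} (A C : Matrix (Fin n) (Fin n) ℝ) : Prop :=
  A * C * A = A ∧ A * (C * C) = C ∧ (A * C)ᵀ = A * C

/-- `G` is a dual group generalized inverse (DGGI) of the dual matrix `M`. -/
def IsDGGI {n : ℕ} (M G : Matrix (Fin n) (Fin n) (DualNumber ℝ)) : Prop :=
  M * G * M = M ∧ G * M * G = G ∧ M * G = G * M

/-- `X` is a dual Moore–Penrose generalized inverse (DMPGI) of the dual matrix `M`. -/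
def IsDMPGI {n : ℕ} (M X : Matrix (Fin n) (Fin n) (DualNumber ℝ)) : Prop :=
  M * X * M = M ∧ X * M * X = X ∧ (M * X)ᵀ = M * X ∧ (X * M)ᵀ = X * M

/-- `G` is a dual core generalized inverse (DCGI) of the dual matrix `M`. -/
def IsDCGI {n : ℕ} (M G : Matrix (Fin n) (Fin n) (DualNumber ℝ)) : Prop :=
  M * G * M = M ∧ M * (G * G) = G ∧ (M * G)ᵀ = M * G

theorem dm_mul {n : ℕ} (A B C D : Matrix (Fin n) (Fin n) ℝ) :
    dm A B * dm C D = dm (A * C) (A * D + B * C) := by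
  ext i j
  · have h := map_sum (TrivSqZeroExt.fstHom ℝ ℝ ℝ) (fun x => dm A B i x * dm C D x j) Finset.univ
    simp only [TrivSqZeroExt.fstHom_apply] at h
    rw [Matrix.mul_apply, h]
    simp [dm, Matrix.mul_apply]
  · have h := map_sum (TrivSqZeroExt.sndHom ℝ ℝ) (fun x => dm A B i x * dm C D x j) Finset.univ
    simp only [TrivSqZeroExt.sndHom_apply] at h
    rw [Matrix.mul_apply, h]
    simp [dm, Matrix.mul_apply, Finset.sum_add_distrib, mul_comm]

theorem dm_inj {n : ℕ} (A B C D : Matrix (Fin n) (Fin n) ℝ) :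
    dm A B = dm C D ↔ A = C ∧ B = D := by
  constructor
  · intro h
    constructor
    · ext i j
      have := congrArg TrivSqZeroExt.fst (congrFun (congrFun h i) j)
      simpa [dm] using this
    · ext i j
      have := congrArg TrivSqZeroExt.snd (congrFun (congrFun h i) j)
      simpa [dm] using this
  · rintro ⟨rfl, rfl⟩
    rfl

theorem dm_tr {n : ℕ} (A B : Matrix (Fin n) (Fin n) ℝ) : (dm A B)ᵀ = dm Aᵀ Bᵀ := rfl

theorem dm_surj {n : ℕ} (M : Matrix (Fin n) (Fin n) (DualNumber ℝ)) :
    ∃ C D, M = dm C D := by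
  refine ⟨fun i j => (M i j).fst, fun i j => (M i j).snd, ?_⟩
  ext i j <;> simp [dm]

theorem core_aux {n : ℕ} (A C : Matrix (Fin n) (Fin n) ℝ) (h1 : A * C * A = A)
    (h2 : A * (C * C) = C) : C * A * A = A := by
  have h2' : A * C * C = C := by rw [Matrix.mul_assoc, h2]
  have hE : (A * C) * (A * C) = A * C := by rw [← Matrix.mul_assoc, h1]
  generalize hEd : A * C = E at *
  have hm : (A * E + (1 - E)) * (C * E + (1 - E)) = 1 := by
    have e1 : (A * E + (1 - E)) * (C * E + (1 - E)) = A * (E * C) * E + A * (E - E * E)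
      + (C - E * C) * E + (1 - E - (E - E * E)) := by noncomm_ring
    rw [e1, h2', hE, hEd, hE]; simp
  have hm' := mul_eq_one_comm.mp hm
  have e2 : (C * E + (1 - E)) * (A * E + (1 - E)) = C * (E * A) * E + C * (E - E * E)
      + (A - E * A) * E + (1 - E - (E - E * E)) := by noncomm_ring
  rw [e2, h1, hE] at hm'
  have h3 : C * A * E = E := by
    simp at hm'
    have := congrArg (fun M => M - 1 + E) hm'
    simpa [sub_eq_add_neg, add_assoc, add_comm, add_left_comm] using this
  calc C * A * A = C * A * E * A := by rw [Matrix.mul_assoc (C * A), h1]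
    _ = A := by rw [h3, h1]

theorem stmt10 {n : ℕ} (A B X : Matrix (Fin n) (Fin n) ℝ)
    (hX : IsMoorePenrose A X) :
    (∃ G : Matrix (Fin n) (Fin n) (DualNumber ℝ), IsDCGI (dm A B) G) ↔
      ∃ G : Matrix (Fin n) (Fin n) ℝ, IsGroupInv A G ∧
        (1 - A * X) * B * (1 - A * G) = 0 := by
  obtain ⟨x1, x2, x3, x4⟩ := hX
  constructor
  · rintro ⟨M, hM⟩
    obtain ⟨C, D, rfl⟩ := dm_surj M
    simp only [IsDCGI, dm_mul, dm_tr, dm_inj] at hM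
    obtain ⟨⟨a1, a2⟩, ⟨b1, b2⟩, c1, c2⟩ := hM
    have hc := core_aux A C a1 b1
    have hAX : A * X = A * C := by
      have e1 : (A * X) * (A * C) = A * C := by rw [← Matrix.mul_assoc, x1]
      have e2 := congrArg Matrix.transpose e1
      rw [Matrix.transpose_mul, c1, x3, ← Matrix.mul_assoc, a1] at e2
      exact e2
    have hAG : A * (C * C * A) = C * A := by rw [← Matrix.mul_assoc, b1]
    have hGA : C * C * A * A = C * A := by
      rw [Matrix.mul_assoc C C A, Matrix.mul_assoc C, hc]
    refine ⟨C * C * A, ⟨?_, ?_, ?_⟩, ?_⟩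
    · rw [hAG, hc]
    · rw [hGA, Matrix.mul_assoc, hAG, Matrix.mul_assoc]
    · rw [hAG, hGA]
    · rw [hAX, hAG]
      have e3 : (1 - A * C) * B * (1 - C * A) =
          (1 - A * C) * (B - (A * C * B + (A * D + B * C) * A)) + (1 - A * C) * (A * C * B)
            + (A * D * A - A * C * A * D * A) := by noncomm_ring
      have e4 : (1 - A * C) * (A * C * B) = 0 := by
        rw [Matrix.sub_mul, Matrix.one_mul, ← Matrix.mul_assoc (A * C), ← Matrix.mul_assoc (A * C),
          a1, sub_self]
      rw [e3, e4, a2, a1]; simp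
  · rintro ⟨G, ⟨g1, g2, g3⟩, h⟩
    obtain ⟨C, hC⟩ : ∃ C, C = G * A * X := ⟨_, rfl⟩
    have hAC : A * C = A * X := by rw [hC, ← Matrix.mul_assoc, ← Matrix.mul_assoc, g1]
    have hCA : C * A = A * G := by
      rw [hC, Matrix.mul_assoc, Matrix.mul_assoc, ← Matrix.mul_assoc A, x1, g3]
    rw [← hAC, ← hCA] at h
    have a1 : A * C * A = A := by rw [hAC, x1]
    have c1 : (A * C)ᵀ = A * C := by rw [hAC, x3]
    have hEC : A * C * C = C := by
      rw [hAC, hC, ← g3, ← Matrix.mul_assoc, ← Matrix.mul_assoc, x1]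
    have hCE : C * (A * C) = C := by
      rw [← Matrix.mul_assoc, hCA, hC, g3, ← Matrix.mul_assoc (G * A) (G * A) X,
        ← Matrix.mul_assoc (G * A) G A, g2]
    clear hC hCA g1 g2 g3 x1 x2 x3 x4 hAC
    obtain ⟨E, hE⟩ : ∃ E, E = A * C := ⟨_, rfl⟩
    rw [← hE] at a1 c1 hEC hCE h
    have hEE : E * E = E := by
      nth_rewrite 1 [hE]
      rw [Matrix.mul_assoc, hCE, hE]
    obtain ⟨K, hK⟩ : ∃ K, K = (1 - E) * B * C := ⟨_, rfl⟩
    have hEK : E * K = 0 := by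
      rw [hK, ← Matrix.mul_assoc, ← Matrix.mul_assoc, Matrix.mul_sub, hEE]; simp
    have hKE : K * E = K := by rw [hK, Matrix.mul_assoc, hCE]
    have hKtE : Kᵀ * E = 0 := by
      have := congrArg Matrix.transpose hEK
      rwa [Matrix.transpose_mul, c1, Matrix.transpose_zero] at this
    have hEKt : E * Kᵀ = Kᵀ := by
      have := congrArg Matrix.transpose hKE
      rwa [Matrix.transpose_mul, c1] at this
    have hKtA : Kᵀ * A = 0 := by rw [← a1, ← Matrix.mul_assoc, hKtE, Matrix.zero_mul]
    have hKtC : Kᵀ * C = 0 := by rw [← hEC, ← Matrix.mul_assoc, hKtE, Matrix.zero_mul]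
    have hKA : K * A = (1 - E) * B := by
      rw [Matrix.mul_sub, Matrix.mul_one, sub_eq_zero] at h
      rw [hK, Matrix.mul_assoc, ← h]
    obtain ⟨D, hD⟩ : ∃ D, D = K * C + C * (Kᵀ - B * C - A * K * C) := ⟨_, rfl⟩
    have hS : A * D + B * C = K + Kᵀ := by
      have : A * D + B * C = A * K * C + (A * C) * Kᵀ - (A * C) * B * C - (A * C) * A * K * C
          + B * C := by rw [hD]; noncomm_ring
      rw [this, ← hE, a1, hEKt, hK]; noncomm_ring
    have hED : E * D = D - K * C := by
      have : E * D = (E * K) * C + (E * C) * (Kᵀ - B * C - A * K * C) := by rw [hD]; noncomm_ring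
      rw [this, hEK, hEC, hD]; noncomm_ring
    refine ⟨dm C D, ?_⟩
    simp only [IsDCGI, dm_mul, dm_tr, dm_inj]
    rw [hS, ← hE]
    refine ⟨⟨a1, ?_⟩, ⟨?_, ?_⟩, c1, ?_⟩
    · rw [Matrix.add_mul, hKtA, hKA]; noncomm_ring
    · rw [← Matrix.mul_assoc, ← hE, hEC]
    · have : A * (C * D + D * C) + B * (C * C) = (A * C) * D + (A * D + B * C) * C := by
        noncomm_ring
      rw [this, hS, ← hE, hED, Matrix.add_mul, hKtC]; noncomm_ring
    · rw [Matrix.transpose_add, Matrix.transpose_transpose, add_comm]
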